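/- arXiv:1808.02979 — 4 statements merged into one kernel-verified Lean document; each statement's English description precedes it below -/
import Mathlib

section
/- For every integer g ≥ 2 there exists a surjective group homomorphism φ from P_g to DihedralGroup (2g) with φ(a) = r g, φ(b) = sr 1 and φ(c) = sr (2 − g) (indices taken in ZMod (2g)). -/
/-!
The prescribed images satisfy the relations of `P_g`: `r g` squares to `r (2 * g) = 1`, reflections
are involutions, and `r g * sr 1 * sr (2 - g) = r 1`, which has order `2 * g`. Hence they extend to
a homomorphism on the presented group. Its range contains the rotation `r 1`, the image of `abc`,
and the reflection `sr 1`, the image of `b`, and these two elements generate the dihedral group.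
-/

/-- The defining relations `a² = b² = c² = (abc)^{2g} = 1` of the `(0; 2, 2, 2, 2g)` orbifold
group, with generators `a = 0`, `b = 1`, `c = 2` of type `Fin 3`. -/
def pRels (g : ℕ) : Set (FreeGroup (Fin 3)) :=
  {FreeGroup.of 0 ^ 2, FreeGroup.of 1 ^ 2, FreeGroup.of 2 ^ 2,
    (FreeGroup.of 0 * FreeGroup.of 1 * FreeGroup.of 2) ^ (2 * g)}

/-- The `(0; 2, 2, 2, 2g)` orbifold group `P_g`. -/
abbrev PGroup (g : ℕ) : Type := PresentedGroup (pRels g)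

/-- The images in `DihedralGroup (2 * g)` of the generators `a`, `b`, `c` of `P_g`. -/
def dihedralImage (g : ℕ) : Fin 3 → DihedralGroup (2 * g) :=
  ![DihedralGroup.r (g : ZMod (2 * g)), DihedralGroup.sr 1,
    DihedralGroup.sr (2 - (g : ZMod (2 * g)))]

lemma dihedralImage_prod (g : ℕ) :
    dihedralImage g 0 * dihedralImage g 1 * dihedralImage g 2 = DihedralGroup.r 1 := by
  simp only [dihedralImage, Matrix.cons_val, DihedralGroup.r_mul_sr, DihedralGroup.sr_mul_sr]
  congr 1
  ring

lemma dihedralImage_rels (g : ℕ) :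
    ∀ w ∈ pRels g, FreeGroup.lift (dihedralImage g) w = 1 := by
  rintro w (rfl | rfl | rfl | rfl)
  · have h : (g : ZMod (2 * g)) + g = 0 := by
      have := ZMod.natCast_self (2 * g)
      push_cast at this
      rw [← two_mul, this]
    rw [map_pow, FreeGroup.lift_apply_of, pow_two]
    simp only [dihedralImage, Matrix.cons_val, DihedralGroup.r_mul_r, h, DihedralGroup.r_zero]
  · simp [dihedralImage, pow_two]
  · simp [dihedralImage, pow_two]
  · simp only [map_pow, map_mul, FreeGroup.lift_apply_of]
    rw [dihedralImage_prod, DihedralGroup.r_one_pow_n]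

/-- `r 1` and `sr 1` generate the dihedral group. -/
lemma dihedral_mem_of_r_one_of_sr_one {n : ℕ} (H : Subgroup (DihedralGroup n))
    (hr : DihedralGroup.r 1 ∈ H) (hs : DihedralGroup.sr 1 ∈ H) (x : DihedralGroup n) :
    x ∈ H := by
  have hrot : ∀ i : ZMod n, DihedralGroup.r i ∈ H := by
    intro i
    obtain ⟨k, rfl⟩ := ZMod.intCast_surjective i
    rw [← DihedralGroup.r_one_zpow]
    exact H.zpow_mem hr k
  rcases x with i | i
  · exact hrot i
  · have h := H.mul_mem hs (hrot (i - 1))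
    rwa [DihedralGroup.sr_mul_r, add_sub_cancel] at h

/-- For every `g ≥ 2` there is a surjective homomorphism from the `(0; 2, 2, 2, 2g)` orbifold
group `P_g` to the dihedral group of order `4g` with `a ↦ r g`, `b ↦ sr 1`,
`c ↦ sr (2 − g)`. -/
theorem pGroup_to_dihedral_surjective (g : ℕ) (hg : 2 ≤ g) :
    ∃ φ : PGroup g →* DihedralGroup (2 * g),
      Function.Surjective φ ∧
      φ (PresentedGroup.of 0) = DihedralGroup.r (g : ZMod (2 * g)) ∧
      φ (PresentedGroup.of 1) = DihedralGroup.sr (1 : ZMod (2 * g)) ∧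
      φ (PresentedGroup.of 2) = DihedralGroup.sr (2 - (g : ZMod (2 * g))) := by
  have hof : ∀ i, PresentedGroup.toGroup (dihedralImage_rels g) (PresentedGroup.of i) =
      dihedralImage g i := fun i => PresentedGroup.toGroup.of _
  refine ⟨PresentedGroup.toGroup (dihedralImage_rels g), fun x => ?_, hof 0, hof 1, hof 2⟩
  refine dihedral_mem_of_r_one_of_sr_one (MonoidHom.range _) ?_ ⟨_, hof 1⟩ x
  refine ⟨PresentedGroup.of 0 * PresentedGroup.of 1 * PresentedGroup.of 2, ?_⟩
  rw [map_mul, map_mul, hof, hof, hof, dihedralImage_prod]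
end

section
/- For all f, g ∈ CircleDeg1Lift, the translation cocycle satisfies |τ(f * g) − τ(f) − τ(g)| ≤ 1. -/
open CircleDeg1Lift

/-!
The idea is to compare `(f * g) ^ n` with `f ^ n * g ^ n`, paying only `1` per factor.

The key fact (`mul_mul_apply_le`) is that reversing a product of three lifts moves the image of any
point by at most `2`. For homeomorphisms, `c b a (a b c)⁻¹` is the commutator of `c b` and
`a c⁻¹`, and commutators move points by less than `2`; the argument below uses no inverses, so it
applies to all monotone degree one lifts.

Reversing the three blocks `g ^ j`, `f * g`, `f` turns `f ^ i * g ^ j * (f * g) ^ (m + 2)` into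
`f ^ (i + 2) * g ^ (j + 2) * (f * g) ^ m`. So `k` reversals turn `(f * g) ^ (2 * k)` into
`f ^ (2 * k) * g ^ (2 * k)`, at a total cost of at most `2 * k`. Since `h ^ n` moves `0` by
`n * τ h` up to an error of at most `1`, this gives
`2 * k * |τ (f * g) - τ f - τ g| ≤ 2 * k + 4` for every `k`, and the bound follows on letting `k`
tend to infinity.
-/

/-- Reversing a product of three lifts raises the value at a point by at most `2`. Exchanging the
roles of `a` and `c` gives the bound in the other direction. -/
lemma mul_mul_apply_le (a b c : CircleDeg1Lift) (x : ℝ) :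
    c (b (a x)) ≤ a (b (c x)) + 2 := by
  -- Up to integer translations, `c x ≤ a x < c x + 1` and `x ≤ b (c x) < x + 1`.
  obtain ⟨k, hk⟩ : ∃ k : ℤ, k = ⌊a x - c x⌋ := ⟨_, rfl⟩
  obtain ⟨l, hl⟩ : ∃ l : ℤ, l = ⌊b (c x) - x⌋ := ⟨_, rfl⟩
  have hk₁ : (k : ℝ) ≤ a x - c x := hk ▸ Int.floor_le _
  have hk₂ : a x - c x < k + 1 := hk ▸ Int.lt_floor_add_one _
  have hl₁ : (l : ℝ) ≤ b (c x) - x := hl ▸ Int.floor_le _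
  have hl₂ : b (c x) - x < l + 1 := hl ▸ Int.lt_floor_add_one _
  have h₁ : b (a x) ≤ b (c x) + (k + 1 : ℤ) := by
    rw [← b.map_add_int]
    exact b.mono (by push_cast; linarith)
  have h₂ : c (b (a x)) ≤ c x + (l + 1 + (k + 1) : ℤ) := by
    rw [← c.map_add_int]
    exact c.mono (by push_cast at h₁ ⊢; linarith)
  have h₃ : a x + l ≤ a (b (c x)) := by
    rw [← a.map_add_int]
    exact a.mono (by linarith)
  push_cast at h₂
  linarith

/-- Each reversal of the blocks `g ^ j`, `f * g`, `f` collects two more factors of each kind. -/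
lemma pow_mul_pow_step (f g : CircleDeg1Lift) (i j m : ℕ) (x : ℝ) :
    |(f ^ i * g ^ j * (f * g) ^ (m + 2)) x -
      (f ^ (i + 2) * g ^ (j + 2) * (f * g) ^ m) x| ≤ 2 := by
  have e₁ : f ^ i * g ^ j * (f * g) ^ (m + 2) =
      f ^ i * (g ^ j * ((f * g) * (f * (g * (f * g) ^ m)))) := by
    simp only [pow_succ', mul_assoc]
  have e₂ : f ^ (i + 2) * g ^ (j + 2) * (f * g) ^ m =
      f ^ i * (f * ((f * g) * (g ^ j * (g * (f * g) ^ m)))) := by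
    rw [pow_add f, show j + 2 = 1 + j + 1 by ring, pow_succ g, pow_add g, pow_two, pow_one]
    simp only [mul_assoc]
  have key : ∀ y z : ℝ, y ≤ z + 2 → (f ^ i) y ≤ (f ^ i) z + 2 := fun y z h => by
    have := (f ^ i).mono h
    rwa [show z + 2 = z + (2 : ℕ) by norm_num, map_add_nat, Nat.cast_ofNat] at this
  rw [e₁, e₂, abs_le]
  generalize g * (f * g) ^ m = w
  have h₁ := key _ _ (mul_mul_apply_le (g ^ j) (f * g) f (w x))
  have h₂ := key _ _ (mul_mul_apply_le f (f * g) (g ^ j) (w x))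
  simp only [mul_apply] at h₁ h₂ ⊢
  constructor <;> linarith

lemma mul_pow_sub_pow_mul_pow_le (f g : CircleDeg1Lift) (x : ℝ) (k : ℕ) : ∀ i j : ℕ,
    |(f ^ i * g ^ j * (f * g) ^ (2 * k)) x - (f ^ (i + 2 * k) * g ^ (j + 2 * k)) x| ≤ 2 * k := by
  induction k with
  | zero => intro i j; simp
  | succ k ih =>
    intro i j
    have h₁ := pow_mul_pow_step f g i j (2 * k) x
    have h₂ := ih (i + 2) (j + 2)
    rw [show i + 2 + 2 * k = i + 2 * (k + 1) by ring,
      show j + 2 + 2 * k = j + 2 * (k + 1) by ring] at h₂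
    rw [show 2 * k + 2 = 2 * (k + 1) by ring] at h₁
    have h₃ := (abs_sub_le _ _ _).trans (add_le_add h₁ h₂)
    push_cast
    linarith

/-- For all `f, g : CircleDeg1Lift`, the translation cocycle satisfies
`|τ(f * g) − τ(f) − τ(g)| ≤ 1`. -/
theorem translation_cocycle_bounded (f g : CircleDeg1Lift) :
    |translationNumber (f * g) - translationNumber f - translationNumber g| ≤ 1 := by
  have bound : ∀ k : ℕ, 2 * (k : ℝ) *
      |translationNumber (f * g) - translationNumber f - translationNumber g| ≤ 2 * k + 4 := by
    intro k
    have h₀ := mul_pow_sub_pow_mul_pow_le f g 0 k 0 0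
    simp only [pow_zero, one_mul, zero_add, mul_apply] at h₀
    have h₁ := dist_pow_map_zero_mul_translationNumber_le (f * g) (2 * k)
    have h₂ := dist_pow_map_zero_mul_translationNumber_le f (2 * k)
    have h₃ := dist_pow_map_zero_mul_translationNumber_le g (2 * k)
    have h₄ := (dist_map_map_zero_lt (f ^ (2 * k)) (g ^ (2 * k))).le
    rw [Real.dist_eq] at h₁ h₂ h₃ h₄
    push_cast at h₁ h₂ h₃
    rw [abs_le] at h₀ h₁ h₂ h₃ h₄
    have hk : (0 : ℝ) ≤ 2 * k := by positivity
    rw [← abs_of_nonneg hk, ← abs_mul, abs_of_nonneg hk, abs_le]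
    constructor <;> linarith
  by_contra! h
  obtain ⟨k, hk⟩ := exists_nat_gt
    (2 / (|translationNumber (f * g) - translationNumber f - translationNumber g| - 1))
  rw [div_lt_iff₀ (by linarith)] at hk
  linarith [bound k]
end

section
/- Let f be a unit of the monoid CircleDeg1Lift and suppose f^k = translate m for some integer k ≥ 1 and some integer m (that is, f is a lift of a finite-order orientation-preserving circle homeomorphism). If τ(f) is an integer, then f = translate (τ(f)); in particular, a finite-order orientation-preserving circle homeomorphism with integer rotation number is the identity. -/
/-!
Taking translation numbers in `f ^ k = translate m` gives `k * τ f = m`, so if `τ f = j` is an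
integer then `f ^ k` is translation by `k * j`. Monotonicity then forces `f x = x + j` at every
point: if `f x < x + j` (or `>`), iterating `k` times would give a strict inequality between
`f ^ k` at `x` and `x + k * j`. This last step is Mathlib's `CircleDeg1Lift.iterate_pos_eq_iff`;
it uses that `f` commutes with integer translations, hence the integrality of `τ f`.
-/

open CircleDeg1Lift

/-- Let `f` be a unit of `CircleDeg1Lift` with `f ^ k = translate m` for some integer `k ≥ 1`
and some integer `m` (so `f` is a lift of a finite-order orientation-preserving circle
homeomorphism).  If the translation number of `f` is an integer, then
`f = translate (τ f)`; in particular a finite-order orientation-preserving circle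
homeomorphism with integer rotation number is the identity. -/
theorem finite_order_integer_rotation_number_eq_translate (f : CircleDeg1Liftˣ)
    (k : ℤ) (hk : 1 ≤ k) (m : ℤ)
    (hfin : f ^ k = translate (Multiplicative.ofAdd (m : ℝ)))
    (hint : ∃ j : ℤ, translationNumber (f : CircleDeg1Lift) = j) :
    f = translate (Multiplicative.ofAdd (translationNumber (f : CircleDeg1Lift))) := by
  obtain ⟨j, hj⟩ := hint
  lift k to ℕ using by lia
  have hk0 : 0 < k := by lia
  have hm : (m : ℝ) = k * j := by
    have h := translationNumber_zpow f k
    rw [hfin, translationNumber_translate, hj] at h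
    exact_mod_cast h
  rw [zpow_natCast] at hfin
  rw [hj]
  refine Units.ext (CircleDeg1Lift.ext fun x => ?_)
  have hx : (f : CircleDeg1Lift)^[k] x = x + k * j := by
    rw [← coe_pow, ← Units.val_pow_eq_pow_val, hfin, translate_apply, hm, add_comm]
  rw [translate_apply, add_comm]
  exact (iterate_pos_eq_iff _ hk0).mp hx
end

section
/- Let f be a unit of the monoid CircleDeg1Lift and suppose f^k = translate m for some integer k ≥ 1 and some integer m. If 2·τ(f) is an integer, then there exists an integer j with f² = translate j; in other words, if a finite-order orientation-preserving circle homeomorphism has rotation number 0 or 1/2 (mod ℤ), then its square is the identity. -/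
open CircleDeg1Lift

/-!
Write `2 τ(f) = j`. Taking translation numbers in `f ^ k = translate m` gives `k τ(f) = m`, hence
`2 m = k j`, so the `k`-th iterate of `f ^ 2` is translation by `k j`. For a monotone degree-one
lift, `g^[k] x = x + k j` forces `g x = x + j` (`CircleDeg1Lift.iterate_pos_eq_iff`), because
`g x < x + j` or `g x > x + j` would persist under iteration. With `g = f ^ 2`, this gives
`f ^ 2 = translate j`.
-/

/-- Let `f` be a unit of `CircleDeg1Lift` with `f ^ k = translate m` for some integer `k ≥ 1`
and some integer `m`.  If `2 τ(f)` is an integer (i.e. `f` is a lift of a finite-order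
orientation-preserving circle homeomorphism with rotation number `0` or `1/2` mod `ℤ`),
then `f ^ 2 = translate j` for some integer `j`: the square of the underlying circle
homeomorphism is the identity. -/
theorem finite_order_half_integer_rotation_number_sq_eq_id (f : CircleDeg1Liftˣ)
    (k : ℤ) (hk : 1 ≤ k) (m : ℤ)
    (hfin : f ^ k = translate (Multiplicative.ofAdd (m : ℝ)))
    (hint : ∃ j : ℤ, 2 * translationNumber (f : CircleDeg1Lift) = j) :
    ∃ j : ℤ, f ^ 2 = translate (Multiplicative.ofAdd (j : ℝ)) := by
  obtain ⟨j, hj⟩ := hint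
  refine ⟨j, ?_⟩
  lift k to ℕ using by lia
  have hk0 : 0 < k := by lia
  rw [zpow_natCast] at hfin
  have hτ : (k : ℝ) * translationNumber (f : CircleDeg1Lift) = m := by
    rw [← translationNumber_pow, ← Units.val_pow_eq_pow_val, hfin, translationNumber_translate]
  have hmj : (m : ℝ) + m = k * j := by rw [← hj, ← hτ]; ring
  ext x
  rw [translate_apply, add_comm, ← iterate_pos_eq_iff _ hk0, ← coe_pow,
    ← Units.val_pow_eq_pow_val, pow_right_comm, hfin, pow_two, Units.val_mul, mul_apply,
    translate_apply, translate_apply, ← hmj]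
  ring
end
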